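/- arXiv:0912.0478 — 3 statements merged into one kernel-verified Lean document; each statement's English description precedes it below -/
import Mathlib

section
/- Let L be a bounded distributive lattice and let f : L^n → L be a lattice polynomial function. Then for each j ∈ [n], the variable x_j is essential in f if and only if there exists a set J ⊆ [n] \ {j} such that f(e_J) < f(e_{J ∪ {j}}). -/
/-- Lattice polynomial functions: the smallest class of functions `L^n → L`
containing the projections and the constant functions and closed under
pointwise joins and meets. -/
inductive IsLatticePolynomial {L : Type*} [Lattice L] {n : ℕ} : ((Fin n → L) → L) → Prop
  | proj (i : Fin n) : IsLatticePolynomial (fun x => x i)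
  | const (c : L) : IsLatticePolynomial (fun _ => c)
  | sup {f g : (Fin n → L) → L} : IsLatticePolynomial f → IsLatticePolynomial g →
      IsLatticePolynomial (fun x => f x ⊔ g x)
  | inf {f g : (Fin n → L) → L} : IsLatticePolynomial f → IsLatticePolynomial g →
      IsLatticePolynomial (fun x => f x ⊓ g x)

/-- The variable `x_j` is essential in `f` if there are two tuples differing
only in their `j`-th component on which `f` takes different values. -/
def EssentialVar {L : Type*} {n : ℕ} (f : (Fin n → L) → L) (j : Fin n) : Prop :=
  ∃ x y : Fin n → L, (∀ i, i ≠ j → x i = y i) ∧ f x ≠ f y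

/-!
In a distributive lattice the maps `· ⊓ c` and `· ⊔ c` are lattice homomorphisms, and they jointly
separate points. Applied with `c = x k`, this shows that `f x` is determined by the two values of
`f` at `x` with its `k`-th entry replaced by `⊤` and by `⊥`; hence two lattice polynomial functions
that agree on the characteristic vectors are equal. By monotonicity, `x_j` is inessential in `f`
exactly when substituting `⊥` and `⊤` for `x_j` gives the same function, and both substitutions are
again lattice polynomial functions, so they need only be compared on characteristic vectors.
-/

section CharVec

variable {ι : Type*} [DecidableEq ι] (L : Type*) [Top L] [Bot L]

/-- The characteristic vector `e_I` of a finite set `I` of indices: `⊤` on `I`, `⊥` elsewhere. -/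
def charVec (I : Finset ι) : ι → L :=
  I.piecewise ⊤ ⊥

theorem charVec_insert (j : ι) (I : Finset ι) :
    charVec L (insert j I) = Function.update (charVec L I) j ⊤ :=
  I.piecewise_insert ⊤ ⊥ j

theorem charVec_erase (j : ι) (I : Finset ι) :
    charVec L (I.erase j) = Function.update (charVec L I) j ⊥ := by
  ext i
  obtain rfl | hij := eq_or_ne i j
  · simp [charVec]
  · simp [charVec, Finset.piecewise, hij]

end CharVec

section LatticePolynomial

variable {L : Type*} {m n : ℕ} {f g : (Fin n → L) → L}

namespace IsLatticePolynomial

theorem monotone [Lattice L] (hf : IsLatticePolynomial f) : Monotone f := by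
  induction hf with
  | proj i => exact Function.monotone_eval i
  | const c => exact monotone_const
  | sup _ _ ihf ihg => exact ihf.sup ihg
  | inf _ _ ihf ihg => exact ihf.inf ihg

theorem comp [Lattice L] (hf : IsLatticePolynomial f) {p : Fin n → (Fin m → L) → L}
    (hp : ∀ i, IsLatticePolynomial (p i)) : IsLatticePolynomial fun x => f fun i => p i x := by
  induction hf with
  | proj i => exact hp i
  | const c => exact .const c
  | sup _ _ ihf ihg => exact ihf.sup ihg
  | inf _ _ ihf ihg => exact ihf.inf ihg

theorem comp_update_const [Lattice L] (hf : IsLatticePolynomial f) (j : Fin n) (c : L) :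
    IsLatticePolynomial fun x => f (Function.update x j c) := by
  refine hf.comp fun i => ?_
  obtain rfl | hij := eq_or_ne i j
  · simpa only [Function.update_self] using .const c
  · simpa only [Function.update_of_ne hij] using .proj i

theorem map_congr {F M : Type*} [Lattice L] [Lattice M] [FunLike F L M] [LatticeHomClass F L M]
    (hf : IsLatticePolynomial f) (φ : F) {x y : Fin n → L} (hxy : ∀ i, φ (x i) = φ (y i)) :
    φ (f x) = φ (f y) := by
  induction hf with
  | proj i => exact hxy i
  | const c => rfl
  | sup _ _ ihf ihg => rw [map_sup, map_sup, ihf, ihg]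
  | inf _ _ ihf ihg => rw [map_inf, map_inf, ihf, ihg]

theorem inf_congr [DistribLattice L] (hf : IsLatticePolynomial f) {x y : Fin n → L} {c : L}
    (hxy : ∀ i, x i ⊓ c = y i ⊓ c) : f x ⊓ c = f y ⊓ c :=
  let infRightHom : LatticeHom L L :=
    { toFun := (· ⊓ c)
      map_sup' := fun a b => inf_sup_right a b c
      map_inf' := fun a b => inf_inf_distrib_right a b c }
  hf.map_congr infRightHom hxy

theorem sup_congr [DistribLattice L] (hf : IsLatticePolynomial f) {x y : Fin n → L} {c : L}
    (hxy : ∀ i, x i ⊔ c = y i ⊔ c) : f x ⊔ c = f y ⊔ c :=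
  let supRightHom : LatticeHom L L :=
    { toFun := (· ⊔ c)
      map_sup' := fun a b => sup_sup_distrib_right a b c
      map_inf' := fun a b => sup_inf_right a b c }
  hf.map_congr supRightHom hxy

theorem inf_apply_eq_update_top_inf [DistribLattice L] [OrderTop L] (hf : IsLatticePolynomial f)
    (x : Fin n → L) (k : Fin n) : f x ⊓ x k = f (Function.update x k ⊤) ⊓ x k := by
  refine hf.inf_congr fun i => ?_
  obtain rfl | hik := eq_or_ne i k
  · rw [Function.update_self, inf_idem, top_inf_eq]
  · rw [Function.update_of_ne hik]

theorem sup_apply_eq_update_bot_sup [DistribLattice L] [OrderBot L] (hf : IsLatticePolynomial f)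
    (x : Fin n → L) (k : Fin n) : f x ⊔ x k = f (Function.update x k ⊥) ⊔ x k := by
  refine hf.sup_congr fun i => ?_
  obtain rfl | hik := eq_or_ne i k
  · rw [Function.update_self, sup_idem, bot_sup_eq]
  · rw [Function.update_of_ne hik]

theorem apply_eq_of_update_eq [DistribLattice L] [BoundedOrder L] (hf : IsLatticePolynomial f)
    (hg : IsLatticePolynomial g) {x : Fin n → L} (k : Fin n)
    (hbot : f (Function.update x k ⊥) = g (Function.update x k ⊥))
    (htop : f (Function.update x k ⊤) = g (Function.update x k ⊤)) : f x = g x := by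
  apply eq_of_inf_eq_sup_eq (a := x k)
  · rw [hf.inf_apply_eq_update_top_inf, htop, ← hg.inf_apply_eq_update_top_inf]
  · rw [hf.sup_apply_eq_update_bot_sup, hbot, ← hg.sup_apply_eq_update_bot_sup]

theorem ext_charVec [DistribLattice L] [BoundedOrder L] (hf : IsLatticePolynomial f)
    (hg : IsLatticePolynomial g) (hfg : ∀ I, f (charVec L I) = g (charVec L I)) : f = g := by
  funext x
  suffices h : ∀ S I : Finset (Fin n),
      f (S.piecewise x (charVec L I)) = g (S.piecewise x (charVec L I)) by
    simpa only [Finset.piecewise_univ] using h Finset.univ ∅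
  intro S
  induction S using Finset.induction_on with
  | empty => simpa only [Finset.piecewise_empty] using hfg
  | insert k S hk ih =>
    intro I
    rw [Finset.piecewise_insert]
    apply hf.apply_eq_of_update_eq hg k
    · rw [Function.update_idem, Finset.update_piecewise_of_notMem _ _ _ hk, ← charVec_erase]
      exact ih _
    · rw [Function.update_idem, Finset.update_piecewise_of_notMem _ _ _ hk, ← charVec_insert]
      exact ih _

end IsLatticePolynomial

theorem essentialVar_iff_exists_update_ne [PartialOrder L] [BoundedOrder L] (hf : Monotone f)
    (j : Fin n) :
    EssentialVar f j ↔ ∃ x, f (Function.update x j ⊥) ≠ f (Function.update x j ⊤) := by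
  constructor
  · rintro ⟨x, y, hxy, hne⟩
    by_contra! h
    have apply_eq_update_bot (z : Fin n → L) : f z = f (Function.update z j ⊥) :=
      le_antisymm ((hf (le_update_self_iff.2 le_top)).trans_eq (h z).symm)
        (hf (update_le_self_iff.2 bot_le))
    have update_eq : Function.update x j ⊥ = Function.update y j ⊥ :=
      Function.update_eq_iff.2 ⟨by rw [Function.update_self], fun i hij => by
        rw [Function.update_of_ne hij, hxy i hij]⟩
    exact hne (by rw [apply_eq_update_bot x, update_eq, ← apply_eq_update_bot y])
  · rintro ⟨x, hx⟩
    refine ⟨_, _, fun i hij => ?_, hx⟩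
    rw [Function.update_of_ne hij, Function.update_of_ne hij]

end LatticePolynomial

/-- For a lattice polynomial function `f` over a bounded distributive lattice,
`x_j` is essential in `f` iff there exists `J ⊆ [n] \ {j}` with
`f(e_J) < f(e_{J ∪ {j}})`. -/
theorem essentialVar_iff {L : Type*} [DistribLattice L] [BoundedOrder L] {n : ℕ}
    (f : (Fin n → L) → L) (hf : IsLatticePolynomial f) (j : Fin n) :
    EssentialVar f j ↔
      ∃ J : Finset (Fin n), j ∉ J ∧
        f (fun i => if i ∈ J then ⊤ else (⊥ : L)) <
          f (fun i => if i ∈ insert j J then ⊤ else ⊥) := by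
  rw [essentialVar_iff_exists_update_ne hf.monotone]
  change _ ↔ ∃ J, j ∉ J ∧ f (charVec L J) < f (charVec L (insert j J))
  constructor
  · rintro ⟨x, hx⟩
    obtain ⟨I, hI⟩ : ∃ I, f (Function.update (charVec L I) j ⊥) ≠
        f (Function.update (charVec L I) j ⊤) := by
      by_contra! agree
      have update_eq := (hf.comp_update_const j ⊥).ext_charVec (hf.comp_update_const j ⊤) agree
      exact hx (congrFun update_eq x)
    refine ⟨I.erase j, I.notMem_erase j, ?_⟩
    rw [charVec_insert, charVec_erase, Function.update_idem]
    exact (hf.monotone (Function.update_mono bot_le)).lt_of_ne hI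
  · rintro ⟨J, hj, hJ⟩
    refine ⟨charVec L J, ?_⟩
    rw [← charVec_erase, ← charVec_insert, Finset.erase_eq_of_notMem hj]
    exact hJ.ne
end

section
/- Let L be a bounded chain (a bounded linearly ordered lattice). If a lattice polynomial function f : L^n → L is self-commuting, then f is a weighted disjunction or f has chain form. -/
/-- `f` commutes with `g`. -/
def Commutes {A : Type*} {n m : ℕ} (f : (Fin n → A) → A) (g : (Fin m → A) → A) : Prop :=
  ∀ M : Fin n → Fin m → A,
    f (fun i => g (fun j => M i j)) = g (fun j => f (fun i => M i j))

/-- `f` is self-commuting. -/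
def SelfCommuting {A : Type*} {n : ℕ} (f : (Fin n → A) → A) : Prop :=
  Commutes f f

/-- `f` is a weighted disjunction:
`f(x) = a_∅ ∨ ⋁_{i ∈ [n]} (a_i ∧ x_i)` for some coefficients. -/
def IsWeightedDisjunction {L : Type*} [Lattice L] {n : ℕ} (f : (Fin n → L) → L) : Prop :=
  ∃ (a₀ : L) (a : Fin n → L),
    ∀ x : Fin n → L,
      f x = Finset.univ.fold (fun u v : L => u ⊔ v) a₀ (fun i => a i ⊓ x i)

/-- `f` has chain form:
`f(x) = a_∅ ∨ ⋁_{i ∈ [n]} (a_i ∧ x_i) ∨ ⋁_{1 ≤ ℓ ≤ r} (a_{S_ℓ} ∧ ⋀_{i ∈ S_ℓ} x_i)`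
for a chain of subsets `S_1 ⊆ ⋯ ⊆ S_r ⊆ [n]` with `r ≥ 1` and `|S_1| ≥ 2`,
where the coefficients satisfy `a_I ≤ a_J` whenever `I ⊆ J` among the indexed
sets, and for every `i ∉ S_1` there is `j ∈ S_1` with `a_i ≤ a_j`. -/
def HasChainForm {L : Type*} [Lattice L] {n : ℕ} (f : (Fin n → L) → L) : Prop :=
  ∃ (r : ℕ) (hr : 0 < r) (S : Fin r → Finset (Fin n)) (a₀ : L) (a : Fin n → L)
    (b : Fin r → L) (hne : ∀ ℓ : Fin r, (S ℓ).Nonempty),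
    (∀ ℓ m : Fin r, ℓ ≤ m → S ℓ ⊆ S m) ∧
    2 ≤ (S ⟨0, hr⟩).card ∧
    (∀ i, a₀ ≤ a i) ∧
    (∀ ℓ, a₀ ≤ b ℓ) ∧
    (∀ i ℓ, i ∈ S ℓ → a i ≤ b ℓ) ∧
    (∀ ℓ m, S ℓ ⊆ S m → b ℓ ≤ b m) ∧
    (∀ i, i ∉ S ⟨0, hr⟩ → ∃ j ∈ S ⟨0, hr⟩, a i ≤ a j) ∧
    ∀ x : Fin n → L,
      f x = Finset.univ.fold (fun u v : L => u ⊔ v)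
        (Finset.univ.fold (fun u v : L => u ⊔ v) a₀ (fun i => a i ⊓ x i))
        (fun ℓ : Fin r => b ℓ ⊓ (S ℓ).inf' (hne ℓ) (fun i => x i))

/-!
For `t : L`, the sets `S` at whose indicator vector `f` is at least `t` form an upward closed
family, and these families determine `f`. Evaluating the commutation identity at matrices over
`{⊥, ⊤}` turns it into a condition on each family separately: a set of rows and the transposed
set of columns are members together. If `C` is a minimal member without singleton members inside
it and `D` is any other member, choosing `C` for one row `c ∈ C` and `D` for the rows in
`C \ {c}` gives a member inside `C ∩ D`, so `C` is the least member. Hence a conjunction of two or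
more variables can only be contributed by the least member of some family; as `L` is a chain,
so are the families, and therefore also their least members.
-/

theorem exists_monotone_range_eq_of_isChain {α : Type*} [PartialOrder α] {s : Set α}
    (hfin : s.Finite) (hchain : IsChain (· ≤ ·) s) :
    ∃ (r : ℕ) (e : Fin r → α), Monotone e ∧ Set.range e = s := by
  classical
  let _ : LinearOrder s := hchain.linearOrder
  let _ : Fintype s := hfin.fintype
  let φ : Fin (Fintype.card s) ≃o s := monoEquivOfFin s rfl
  exact ⟨_, fun ℓ => (φ ℓ : α), fun _ _ h => φ.monotone h, by
    rw [Set.range_comp' Subtype.val φ, φ.range_eq, Set.image_univ, Subtype.range_coe]⟩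

section SelfCommutingFamily

variable {ι : Type*} {𝓕 : Set (Set ι)}

/-- A family of subsets of `ι` is self-commuting if its membership predicate, as a Boolean
function of the indicator vector of a subset, commutes with itself. The Boolean matrix is encoded
by its rows `R i`, so that `{i | j ∈ R i}` is its `j`-th column. -/
def IsSelfCommutingFamily (𝓕 : Set (Set ι)) : Prop :=
  ∀ R : ι → Set ι, {i | R i ∈ 𝓕} ∈ 𝓕 ↔ {j | {i | j ∈ R i} ∈ 𝓕} ∈ 𝓕

theorem IsSelfCommutingFamily.isLeast_of_minimal (hcomm : IsSelfCommutingFamily 𝓕)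
    (hup : IsUpperSet 𝓕) {C : Set ι} (hC : Minimal (· ∈ 𝓕) C) (hsing : ∀ c ∈ C, {c} ∉ 𝓕) :
    IsLeast 𝓕 C := by
  classical
  refine ⟨hC.prop, fun D hD c hcC => ?_⟩
  let R : ι → Set ι := fun i => if i = c then C else if i ∈ C then D else ∅
  have hrows : {i | R i ∈ 𝓕} ∈ 𝓕 := by
    refine hup (fun i hi => ?_) hC.prop
    by_cases hic : i = c
    · simpa [R, hic] using hC.prop
    · simpa [R, hic, hi] using hD
  have hcolumns : {j | {i | j ∈ R i} ∈ 𝓕} ⊆ C ∩ D := by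
    intro j hj
    constructor
    · by_contra hjC
      have hcol : {i | j ∈ R i} ⊆ C \ {c} := fun i hi => by
        simp only [R, Set.mem_ofPred_eq] at hi
        split_ifs at hi with hic hiC
        exacts [absurd hi hjC, ⟨hiC, hic⟩, absurd hi (Set.notMem_empty j)]
      exact hC.not_prop_of_lt (Set.sdiff_singleton_ssubset.2 hcC) (hup hcol hj)
    · by_contra hjD
      have hcol : {i | j ∈ R i} ⊆ {c} := fun i hi => by
        simp only [R, Set.mem_ofPred_eq] at hi
        split_ifs at hi with hic hiC
        exacts [hic, absurd hi hjD, absurd hi (Set.notMem_empty j)]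
      exact hsing c hcC (hup hcol hj)
  have hinter : C ∩ D ∈ 𝓕 := hup hcolumns ((hcomm R).1 hrows)
  exact (hC.le_of_le hinter Set.inter_subset_left hcC).2

theorem IsSelfCommutingFamily.exists_isLeast_subset [Finite ι] (hcomm : IsSelfCommutingFamily 𝓕)
    (hup : IsUpperSet 𝓕) {S : Set ι} (hS : S ∈ 𝓕) (hsing : ∀ i ∈ S, {i} ∉ 𝓕) :
    ∃ C ⊆ S, IsLeast 𝓕 C := by
  obtain ⟨C, hCS, hC⟩ := 𝓕.toFinite.exists_le_minimal hS
  exact ⟨C, hCS, hcomm.isLeast_of_minimal hup hC fun c hc => hsing c (hCS hc)⟩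

end SelfCommutingFamily

section SubsetCoeff

variable {L ι : Type*} {f : (ι → L) → L}

open Classical in
/-- The value of `f` at the indicator vector of `S`; for a lattice polynomial function this is the
coefficient `a_S` of `⋀ i ∈ S, x i` in the maximal disjunctive normal form. -/
noncomputable def subsetCoeff [Top L] [Bot L] (f : (ι → L) → L) (S : Set ι) : L :=
  f (S.piecewise ⊤ ⊥)

theorem SelfCommuting.apply_subsetCoeff [Top L] [Bot L] {n : ℕ} {f : (Fin n → L) → L}
    (hsc : SelfCommuting f) (R : Fin n → Set (Fin n)) :
    f (fun i => subsetCoeff f (R i)) = f (fun j => subsetCoeff f {i | j ∈ R i}) := by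
  classical
  exact hsc fun i => (R i).piecewise ⊤ ⊥

theorem subsetCoeff_mono [Preorder L] [BoundedOrder L] (hf : Monotone f) :
    Monotone (subsetCoeff f) := by
  classical
  exact fun S T hST => hf <| Set.piecewise_le
    (fun i hi => by rw [Set.piecewise_eq_of_mem _ _ _ (hST hi)]) (fun _ _ => bot_le)

/-- The upward closed family of sets attached to the threshold `t`, that is, the Boolean function
into which `f` turns under the lattice homomorphism `t ≤ ·` to truth values. -/
def coeffCut [LE L] [Top L] [Bot L] (f : (ι → L) → L) (t : L) : Set (Set ι) :=
  {S | t ≤ subsetCoeff f S}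

theorem isUpperSet_coeffCut [Preorder L] [BoundedOrder L] (hf : Monotone f) (t : L) :
    IsUpperSet (coeffCut f t) :=
  fun _ _ hST hS => hS.trans (subsetCoeff_mono hf hST)

/-- `C` has at least two elements and is the least set whose coefficient is at least that of `C`.
These are the sets `S_ℓ` of the chain form. -/
structure IsConjunctionSet [LE L] [Top L] [Bot L] (f : (ι → L) → L) (C : Set ι) : Prop where
  nontrivial : C.Nontrivial
  isLeast : IsLeast (coeffCut f (subsetCoeff f C)) C

theorem isConjunctionSet_of_isLeast [Preorder L] [Top L] [Bot L] {t : L} {C : Set ι}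
    (hC : C.Nontrivial) (hleast : IsLeast (coeffCut f t) C) : IsConjunctionSet f C :=
  ⟨hC, le_rfl, fun _ hD => hleast.2 (hleast.1.trans hD)⟩

theorem IsConjunctionSet.subset_or_subset [LinearOrder L] [Top L] [Bot L] {C D : Set ι}
    (hC : IsConjunctionSet f C) (hD : IsConjunctionSet f D) : C ⊆ D ∨ D ⊆ C :=
  (le_total (subsetCoeff f C) (subsetCoeff f D)).imp (fun h => hC.isLeast.2 h)
    (fun h => hD.isLeast.2 h)

end SubsetCoeff

theorem IsLatticePolynomial.monotone_s11 {L : Type*} [Lattice L] {n : ℕ} {f : (Fin n → L) → L}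
    (hf : IsLatticePolynomial f) : Monotone f := by
  induction hf with
  | proj i => exact fun _ _ h => h i
  | const c => exact monotone_const
  | sup _ _ hf hg => exact hf.sup hg
  | inf _ _ hf hg => exact hf.inf hg

section Chain

variable {L : Type*} [LinearOrder L] [BoundedOrder L] {n : ℕ} {f : (Fin n → L) → L}

theorem IsLatticePolynomial.le_apply_iff_mem_coeffCut (hf : IsLatticePolynomial f) (t : L)
    (x : Fin n → L) : t ≤ f x ↔ {i | t ≤ x i} ∈ coeffCut f t := by
  simp only [coeffCut, subsetCoeff, Set.mem_ofPred_eq]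
  induction hf with
  | proj i =>
    by_cases hi : t ≤ x i
    · simp [hi]
    · simpa [hi] using fun ht : t = ⊥ => hi (ht ▸ bot_le)
  | const c => rfl
  | sup _ _ hf hg => simp only [le_sup_iff, hf, hg]
  | inf _ _ hf hg => simp only [le_inf_iff, hf, hg]

theorem IsLatticePolynomial.isSelfCommutingFamily_coeffCut (hf : IsLatticePolynomial f)
    (hsc : SelfCommuting f) (t : L) : IsSelfCommutingFamily (coeffCut f t) := by
  intro R
  calc {i | R i ∈ coeffCut f t} ∈ coeffCut f t
      ↔ t ≤ f (fun i => subsetCoeff f (R i)) := (hf.le_apply_iff_mem_coeffCut t _).symm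
    _ ↔ t ≤ f (fun j => subsetCoeff f {i | j ∈ R i}) := by rw [hsc.apply_subsetCoeff]
    _ ↔ {j | {i | j ∈ R i} ∈ coeffCut f t} ∈ coeffCut f t := hf.le_apply_iff_mem_coeffCut t _

theorem IsLatticePolynomial.le_apply_iff (hf : IsLatticePolynomial f) (hsc : SelfCommuting f)
    (t : L) (x : Fin n → L) :
    t ≤ f x ↔ (t ≤ subsetCoeff f ∅ ∨ ∃ i, t ≤ subsetCoeff f {i} ∧ t ≤ x i) ∨
      ∃ C : Set (Fin n), IsConjunctionSet f C ∧ t ≤ subsetCoeff f C ∧ ∀ i ∈ C, t ≤ x i := by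
  have hup := isUpperSet_coeffCut hf.monotone_s11 t
  rw [hf.le_apply_iff_mem_coeffCut]
  constructor
  · intro hx
    by_cases hsing : ∃ i, t ≤ subsetCoeff f {i} ∧ t ≤ x i
    · exact Or.inl (Or.inr hsing)
    obtain ⟨C, hCx, hC⟩ := (hf.isSelfCommutingFamily_coeffCut hsc t).exists_isLeast_subset hup hx
      fun i hi hit => hsing ⟨i, hit, hi⟩
    rcases C.subsingleton_or_nontrivial with hsub | hnon
    · rcases hsub.eq_empty_or_singleton with rfl | ⟨i, rfl⟩
      · exact Or.inl (Or.inl hC.1)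
      · exact Or.inl (Or.inr ⟨i, hC.1, hCx rfl⟩)
    · exact Or.inr ⟨C, isConjunctionSet_of_isLeast hnon hC, hC.1, hCx⟩
  · rintro ((h | ⟨i, h, hi⟩) | ⟨C, -, h, hC⟩)
    · exact hup (Set.empty_subset _) h
    · exact hup (Set.singleton_subset_iff.2 hi) h
    · exact hup hC h

theorem IsConjunctionSet.exists_subsetCoeff_singleton_le {C : Set (Fin n)}
    (hC : IsConjunctionSet f C) (hf : IsLatticePolynomial f) (hsc : SelfCommuting f)
    {i : Fin n} (hi : i ∉ C) : ∃ j ∈ C, subsetCoeff f {i} ≤ subsetCoeff f {j} := by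
  by_contra! hlt
  obtain ⟨j, hj⟩ := hC.nontrivial.nonempty
  have hiC : subsetCoeff f {i} ≤ subsetCoeff f C := by
    by_contra hCi
    exact hi (hC.isLeast.2 (le_of_not_ge hCi) hj ▸ hj)
  obtain ⟨D, hDC, hD⟩ := (hf.isSelfCommutingFamily_coeffCut hsc _).exists_isLeast_subset
    (isUpperSet_coeffCut hf.monotone_s11 _) hiC fun k hk => (hlt k hk).not_ge
  have hDi : D ⊆ {i} := hD.2 (le_refl (subsetCoeff f {i}))
  have hD_empty : D = ∅ := Set.eq_empty_of_forall_notMem fun k hk => hi (hDi hk ▸ hDC hk)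
  exact (hlt j hj).not_ge (hD.1.trans (subsetCoeff_mono hf.monotone_s11 (by simp [hD_empty])))

theorem isWeightedDisjunction_of_forall_not_isConjunctionSet (hf : IsLatticePolynomial f)
    (hsc : SelfCommuting f) (hnone : ∀ C, ¬ IsConjunctionSet f C) : IsWeightedDisjunction f :=
  ⟨subsetCoeff f ∅, fun i => subsetCoeff f {i}, fun x => eq_of_forall_le_iff fun t => by
    simp [Finset.le_fold_max, hf.le_apply_iff hsc, hnone]⟩

theorem hasChainForm_of_range_eq (hf : IsLatticePolynomial f) (hsc : SelfCommuting f) {r : ℕ}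
    (hr : 0 < r) {S : Fin r → Finset (Fin n)} (hS : Monotone S)
    (hrange : Set.range S = {C : Finset (Fin n) | IsConjunctionSet f C}) : HasChainForm f := by
  have hconj (ℓ : Fin r) : IsConjunctionSet f (S ℓ) := hrange.subset (Set.mem_range_self ℓ)
  have hne (ℓ : Fin r) : (S ℓ).Nonempty := (hconj ℓ).nontrivial.nonempty
  have hmono := subsetCoeff_mono hf.monotone_s11
  refine ⟨r, hr, S, subsetCoeff f ∅, fun i => subsetCoeff f {i}, fun ℓ => subsetCoeff f (S ℓ),
    hne, fun _ _ h => hS h,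
    Finset.one_lt_card_iff_nontrivial.2 (hconj _).nontrivial,
    fun _ => hmono (Set.empty_subset _), fun _ => hmono (Set.empty_subset _),
    fun _ _ hi => hmono (Set.singleton_subset_iff.2 hi), fun _ _ h => hmono h,
    fun _ hi => (hconj _).exists_subsetCoeff_singleton_le hf hsc hi,
    fun x => eq_of_forall_le_iff fun t => ?_⟩
  have hexists : (∃ C : Set (Fin n), IsConjunctionSet f C ∧ t ≤ subsetCoeff f C ∧ ∀ i ∈ C, t ≤ x i)
      ↔ ∃ ℓ, t ≤ subsetCoeff f (S ℓ) ∧ ∀ i ∈ S ℓ, t ≤ x i := by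
    refine ⟨fun ⟨C, hC, h⟩ => ?_, fun ⟨ℓ, h⟩ => ⟨S ℓ, hconj ℓ, h⟩⟩
    lift C to Finset (Fin n) using C.toFinite
    obtain ⟨ℓ, rfl⟩ := hrange.superset hC
    exact ⟨ℓ, h⟩
  simp only [Finset.le_fold_max, hf.le_apply_iff hsc, hexists, le_inf_iff, Finset.le_inf'_iff,
    Finset.mem_univ, true_and]

end Chain

/-- Over a bounded chain, every self-commuting lattice polynomial function is
a weighted disjunction or has chain form. -/
theorem weightedDisjunction_or_chainForm_of_selfCommuting
    {L : Type*} [LinearOrder L] [BoundedOrder L] {n : ℕ}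
    (f : (Fin n → L) → L) (hf : IsLatticePolynomial f) (hsc : SelfCommuting f) :
    IsWeightedDisjunction f ∨ HasChainForm f := by
  obtain ⟨r, S, hS, hrange⟩ := exists_monotone_range_eq_of_isChain
    (s := {C : Finset (Fin n) | IsConjunctionSet f C}) (Set.toFinite _)
    fun _ hC _ hD _ => hC.subset_or_subset hD
  rcases r.eq_zero_or_pos with rfl | hr
  · refine Or.inl (isWeightedDisjunction_of_forall_not_isConjunctionSet hf hsc fun C hC => ?_)
    lift C to Finset (Fin n) using C.toFinite
    obtain ⟨ℓ, -⟩ := hrange.superset hC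
    exact ℓ.elim0
  · exact Or.inr (hasChainForm_of_range_eq hf hsc hr hS hrange)
end

section
/- Let L be a distributive lattice and let f : L^n → L have chain form, i.e., f(x_1,…,x_n) = a_∅ ∨ ⋁_{i ∈ [n]} (a_i ∧ x_i) ∨ ⋁_{1 ≤ ℓ ≤ r} (a_{S_ℓ} ∧ ⋀_{i ∈ S_ℓ} x_i) for a chain of subsets S_1 ⊆ S_2 ⊆ ⋯ ⊆ S_r ⊆ [n] with r ≥ 1 and |S_1| ≥ 2, and elements a_∅, a_i (i ∈ [n]), a_{S_ℓ} (1 ≤ ℓ ≤ r) of L such that a_I ≤ a_J whenever I ⊆ J (among the indexed sets), and for all i ∉ S_1 there exists j ∈ S_1 with a_i ≤ a_j. Then for every matrix (x_{ij}) of elements of L (i, j ∈ [n]), f(f(x_{11},…,x_{1n}), f(x_{21},…,x_{2n}), …, f(x_{n1},…,x_{nn})) = a_∅ ∨ ⋁_{i ∈ [n]} ⋁_{j ∈ [n]} (a_i ∧ a_j ∧ x_{ij}) ∨ ⋁_{1 ≤ ℓ ≤ r} (a_{S_ℓ} ∧ ⋀_{i ∈ S_ℓ} ⋀_{j ∈ S_ℓ}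 x_{ij}). -/
/-!
A distributive lattice is separated by its lattice homomorphisms `φ` to `Prop`, so it suffices to
compare both sides after applying `φ`. There the form collapses: if `φ a₀` holds it is constantly
true; if some `φ (a i)` holds, every `S k` contains such an index, so the meets are absorbed and
only a disjunction of variables remains; otherwise only the smallest `S k` with `φ (b k)` matters
and a single conjunction of variables remains, or nothing if there is no such `k`. Constants,
disjunctions of variables and conjunctions of variables visibly compose with themselves as claimed.
-/

section PropValued

variable {L : Type*}

/-- The two-valued homomorphism attached to a prime ideal `J`; it is true off `J`. -/
def latticeHomOfPrimeIdeal [Lattice L] (J : Order.Ideal L) (hJ : J.IsPrime) :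
    LatticeHom L Prop where
  toFun x := x ∉ J
  map_sup' x y := propext <| by
    rw [Order.Ideal.sup_mem_iff, not_and_or]
    rfl
  map_inf' x y := propext
    ⟨fun h => ⟨fun hx => h (J.lower inf_le_left hx), fun hy => h (J.lower inf_le_right hy)⟩,
      fun h hxy => (hJ.mem_or_mem hxy).elim h.1 h.2⟩

theorem le_of_forall_latticeHom_prop [DistribLattice L] {x y : L}
    (h : ∀ φ : LatticeHom L Prop, φ x → φ y) : x ≤ y := by
  by_contra hxy
  have hdisj : Disjoint (Order.PFilter.principal x : Set L) (Order.Ideal.principal y : Set L) :=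
    Set.disjoint_left.2 fun _ hx hy =>
      hxy ((Order.PFilter.mem_principal.1 hx).trans (Order.Ideal.mem_principal.1 hy))
  obtain ⟨J, hJ, hyJ, hxJ⟩ := DistribLattice.prime_ideal_of_disjoint_filter_ideal hdisj
  exact h (latticeHomOfPrimeIdeal J hJ)
    (Set.disjoint_left.1 hxJ (Order.PFilter.mem_principal.2 le_rfl))
    (hyJ (Order.Ideal.mem_principal.2 le_rfl))

theorem eq_of_forall_latticeHom_prop [DistribLattice L] {x y : L}
    (h : ∀ φ : LatticeHom L Prop, φ x ↔ φ y) : x = y :=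
  le_antisymm (le_of_forall_latticeHom_prop fun φ => (h φ).1)
    (le_of_forall_latticeHom_prop fun φ => (h φ).2)

variable [Lattice L] {ι : Type*} (φ : LatticeHom L Prop)

theorem latticeHom_prop_fold_sup_iff (s : Finset ι) (c : L) (g : ι → L) :
    φ (s.fold (· ⊔ ·) c g) ↔ φ c ∨ ∃ i ∈ s, φ (g i) :=
  Finset.fold_op_rel_iff_or (r := fun _ y => φ y) (c := c) (map_sup φ _ _).to_iff

theorem latticeHom_prop_sup'_iff {s : Finset ι} (hs : s.Nonempty) (g : ι → L) :
    φ (s.sup' hs g) ↔ ∃ i ∈ s, φ (g i) := by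
  induction hs using Finset.Nonempty.cons_induction with
  | singleton i => simp
  | cons i s hi hs ih => simp [Finset.sup'_cons hs, ih]

theorem latticeHom_prop_inf'_iff {s : Finset ι} (hs : s.Nonempty) (g : ι → L) :
    φ (s.inf' hs g) ↔ ∀ i ∈ s, φ (g i) := by
  induction hs using Finset.Nonempty.cons_induction with
  | singleton i => simp
  | cons i s hi hs ih => simp [Finset.inf'_cons hs, ih]

end PropValued

theorem exists_forall_le_of_isChain_range {α κ : Type*} [Preorder α] [WellFoundedLT α]
    {f : κ → α} (hf : IsChain (· ≤ ·) (Set.range f)) {p : κ → Prop} (hp : ∃ k, p k) :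
    ∃ k, p k ∧ ∀ l, p l → f k ≤ f l := by
  obtain ⟨k, hk, hmin⟩ := exists_minimalFor_of_wellFoundedLT p f hp
  exact ⟨k, hk, fun l hl => (hf.total ⟨k, rfl⟩ ⟨l, rfl⟩).elim id (hmin hl)⟩

section ChainForm

variable {L ι κ : Type*} [Fintype ι] [Fintype κ]

/-- The lattice polynomial `a₀ ∨ ⋁ i, (a i ∧ x i) ∨ ⋁ k, (b k ∧ ⋀ i ∈ S k, x i)`. The conditions
that make it a chain form are left to the theorems, so that this covers both the function and its
double application (over the index type `ι × ι`). The joins are folds from `a₀` because `L` need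
not have a bottom element. -/
def chainForm [Lattice L] (a₀ : L) (a : ι → L) (b : κ → L) (S : κ → Finset ι)
    (hS : ∀ k, (S k).Nonempty) (x : ι → L) : L :=
  Finset.univ.fold (· ⊔ ·) (Finset.univ.fold (· ⊔ ·) a₀ fun i => a i ⊓ x i)
    fun k => b k ⊓ (S k).inf' (hS k) x

section Lattice

variable [Lattice L] (φ : LatticeHom L Prop) {a₀ : L} {a : ι → L} {b : κ → L}
  {S : κ → Finset ι} {hS : ∀ k, (S k).Nonempty} {x : ι → L}

theorem latticeHom_prop_chainForm_iff : φ (chainForm a₀ a b S hS x) ↔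
    (φ a₀ ∨ ∃ i, φ (a i) ∧ φ (x i)) ∨ ∃ k, φ (b k) ∧ ∀ i ∈ S k, φ (x i) := by
  simp only [chainForm, latticeHom_prop_fold_sup_iff, map_inf, inf_Prop_eq,
    latticeHom_prop_inf'_iff, Finset.mem_univ, true_and]

theorem latticeHom_prop_chainForm (h₀ : φ a₀) : φ (chainForm a₀ a b S hS x) :=
  (latticeHom_prop_chainForm_iff φ).2 (.inl (.inl h₀))

theorem latticeHom_prop_chainForm_iff_exists (h₀ : ¬φ a₀) (ha : ∀ k, ∃ j ∈ S k, φ (a j)) :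
    φ (chainForm a₀ a b S hS x) ↔ ∃ i, φ (a i) ∧ φ (x i) := by
  have meet_absorbed : (∃ k, φ (b k) ∧ ∀ i ∈ S k, φ (x i)) → ∃ i, φ (a i) ∧ φ (x i) := by
    rintro ⟨k, -, hx⟩
    obtain ⟨j, hj, haj⟩ := ha k
    exact ⟨j, haj, hx j hj⟩
  rw [latticeHom_prop_chainForm_iff, or_iff_right h₀, or_iff_left_of_imp meet_absorbed]

theorem latticeHom_prop_chainForm_iff_forall (h₀ : ¬φ a₀) (ha : ∀ i, ¬φ (a i)) {k : κ}
    (hk : φ (b k)) (hmin : ∀ l, φ (b l) → S k ⊆ S l) :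
    φ (chainForm a₀ a b S hS x) ↔ ∀ i ∈ S k, φ (x i) := by
  simp only [latticeHom_prop_chainForm_iff, h₀, ha, false_and, exists_false, false_or]
  exact ⟨fun ⟨l, hl, hx⟩ i hi => hx i (hmin l hl hi), fun hx => ⟨k, hk, hx⟩⟩

theorem not_latticeHom_prop_chainForm (h₀ : ¬φ a₀) (ha : ∀ i, ¬φ (a i)) (hb : ∀ k, ¬φ (b k)) :
    ¬φ (chainForm a₀ a b S hS x) := by
  simp [latticeHom_prop_chainForm_iff, h₀, ha, hb]

theorem latticeHom_prop_chainForm_double_apply_of_exists (h₀ : ¬φ a₀)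
    (ha : ∀ k, ∃ j ∈ S k, φ (a j)) (X : ι → ι → L) :
    φ (chainForm a₀ a b S hS fun i => chainForm a₀ a b S hS (X i)) ↔
      φ (chainForm a₀ (fun p : ι × ι => a p.1 ⊓ a p.2) b (fun k => S k ×ˢ S k)
        (fun k => (hS k).product (hS k)) fun p => X p.1 p.2) := by
  have exists_mem_product (k : κ) : ∃ p ∈ S k ×ˢ S k, φ (a p.1 ⊓ a p.2) := by
    obtain ⟨j, hj, haj⟩ := ha k
    exact ⟨(j, j), Finset.mk_mem_product hj hj, by simp [haj]⟩
  simp only [latticeHom_prop_chainForm_iff_exists φ h₀ ha,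
    latticeHom_prop_chainForm_iff_exists φ h₀ exists_mem_product, map_inf, inf_Prop_eq,
    Prod.exists, and_assoc, exists_and_left]

theorem latticeHom_prop_chainForm_double_apply_of_forall_not (h₀ : ¬φ a₀)
    (ha : ∀ i, ¬φ (a i)) (hchain : IsChain (· ⊆ ·) (Set.range S)) (X : ι → ι → L) :
    φ (chainForm a₀ a b S hS fun i => chainForm a₀ a b S hS (X i)) ↔
      φ (chainForm a₀ (fun p : ι × ι => a p.1 ⊓ a p.2) b (fun k => S k ×ˢ S k)
        (fun k => (hS k).product (hS k)) fun p => X p.1 p.2) := by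
  have ha_inf (p : ι × ι) : ¬φ (a p.1 ⊓ a p.2) := by simp [ha]
  by_cases hb : ∃ k, φ (b k)
  · obtain ⟨k, hk, hmin⟩ := exists_forall_le_of_isChain_range hchain hb
    have hmin_product (l : κ) (hl : φ (b l)) : S k ×ˢ S k ⊆ S l ×ˢ S l :=
      Finset.product_subset_product (hmin l hl) (hmin l hl)
    simp only [latticeHom_prop_chainForm_iff_forall φ h₀ ha hk hmin,
      latticeHom_prop_chainForm_iff_forall (S := fun k => S k ×ˢ S k) φ h₀ ha_inf hk hmin_product,
      Finset.mem_product, Prod.forall, and_imp]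
    exact forall_congr' fun i => forall_comm
  · rw [not_exists] at hb
    exact iff_of_false (not_latticeHom_prop_chainForm φ h₀ ha hb)
      (not_latticeHom_prop_chainForm φ h₀ ha_inf hb)

end Lattice

theorem chainForm_double_apply_general [DistribLattice L] (a₀ : L) (a : ι → L) (b : κ → L)
    (S : κ → Finset ι) (hS : ∀ k, (S k).Nonempty) (hchain : IsChain (· ⊆ ·) (Set.range S))
    (ha : ∀ i k, a i ≤ (S k).sup' (hS k) a) (X : ι → ι → L) :
    chainForm a₀ a b S hS (fun i => chainForm a₀ a b S hS (X i)) =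
      chainForm a₀ (fun p : ι × ι => a p.1 ⊓ a p.2) b (fun k => S k ×ˢ S k)
        (fun k => (hS k).product (hS k)) (fun p => X p.1 p.2) := by
  refine eq_of_forall_latticeHom_prop fun φ => ?_
  by_cases h₀ : φ a₀
  · exact iff_of_true (latticeHom_prop_chainForm φ h₀) (latticeHom_prop_chainForm φ h₀)
  by_cases hφa : ∃ i, φ (a i)
  · obtain ⟨i, hi⟩ := hφa
    have exists_mem (k : κ) : ∃ j ∈ S k, φ (a j) :=
      (latticeHom_prop_sup'_iff φ (hS k) a).1 (OrderHomClass.mono φ (ha i k) hi)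
    exact latticeHom_prop_chainForm_double_apply_of_exists φ h₀ exists_mem X
  · exact latticeHom_prop_chainForm_double_apply_of_forall_not φ h₀ (not_exists.1 hφa) hchain X

end ChainForm

/-- For a function in chain form
`f(x) = a_∅ ∨ ⋁_{i ∈ [n]} (a_i ∧ x_i) ∨ ⋁_{1 ≤ ℓ ≤ r} (a_{S_ℓ} ∧ ⋀_{i ∈ S_ℓ} x_i)`
over a distributive lattice, the double application over a matrix `X`
evaluates to
`a_∅ ∨ ⋁_i ⋁_j (a_i ∧ a_j ∧ X_{ij}) ∨ ⋁_ℓ (a_{S_ℓ} ∧ ⋀_{i ∈ S_ℓ} ⋀_{j ∈ S_ℓ} X_{ij})`. -/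
theorem chainForm_double_apply {L : Type*} [DistribLattice L] {n : ℕ}
    (r : ℕ) (hr : 0 < r) (S : Fin r → Finset (Fin n)) (a₀ : L) (a : Fin n → L)
    (b : Fin r → L) (hne : ∀ ℓ : Fin r, (S ℓ).Nonempty)
    (hchain : ∀ ℓ m : Fin r, ℓ ≤ m → S ℓ ⊆ S m)
    (hcard : 2 ≤ (S ⟨0, hr⟩).card)
    (h₀ : ∀ i, a₀ ≤ a i)
    (h₀' : ∀ ℓ, a₀ ≤ b ℓ)
    (hab : ∀ i ℓ, i ∈ S ℓ → a i ≤ b ℓ)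
    (hbb : ∀ ℓ m, S ℓ ⊆ S m → b ℓ ≤ b m)
    (hS₁ : ∀ i, i ∉ S ⟨0, hr⟩ → ∃ j ∈ S ⟨0, hr⟩, a i ≤ a j)
    (f : (Fin n → L) → L)
    (hf : ∀ x : Fin n → L,
      f x = Finset.univ.fold (fun u v : L => u ⊔ v)
        (Finset.univ.fold (fun u v : L => u ⊔ v) a₀ (fun i => a i ⊓ x i))
        (fun ℓ : Fin r => b ℓ ⊓ (S ℓ).inf' (hne ℓ) (fun i => x i))) :
    ∀ X : Fin n → Fin n → L,
      f (fun i => f (fun j => X i j)) =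
        Finset.univ.fold (fun u v : L => u ⊔ v)
          (Finset.univ.fold (fun u v : L => u ⊔ v) a₀
            (fun p : Fin n × Fin n => a p.1 ⊓ a p.2 ⊓ X p.1 p.2))
          (fun ℓ : Fin r => b ℓ ⊓
            (S ℓ ×ˢ S ℓ).inf' ((hne ℓ).product (hne ℓ)) (fun p => X p.1 p.2)) := by
  have chain_range : IsChain (· ⊆ ·) (Set.range S) :=
    Monotone.isChain_range fun ℓ m => hchain ℓ m
  have le_sup (i : Fin n) (ℓ : Fin r) : a i ≤ (S ℓ).sup' (hne ℓ) a := by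
    obtain ⟨j, hj, hij⟩ : ∃ j ∈ S ⟨0, hr⟩, a i ≤ a j := by
      by_cases hi : i ∈ S ⟨0, hr⟩
      exacts [⟨i, hi, le_rfl⟩, hS₁ i hi]
    exact Finset.le_sup'_of_le a (hchain _ ℓ (Nat.zero_le _) hj) hij
  obtain rfl : f = chainForm a₀ a b S hne := funext hf
  exact chainForm_double_apply_general a₀ a b S hne chain_range le_sup
end
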